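/- Let ⟨N, E, f⟩ be a deterministic synchronized state machine and let S ⊆ P be a closed set of places, i.e. out(t) ∈ S whenever in(t) ∈ S. Then for every marking M and every input event e ∈ E: Σ_{p∈S} step(M, e)(p) ≥ Σ_{p∈S} M(p). -/

import Mathlib

open scoped Classical BigOperators

/-- A synchronized Petri net `⟨N, E, f⟩`: `Pre`/`Post` incidence functions
and a labeling `f` of transitions by input events. -/
structure SyncPN (P T E : Type) where
  Pre : P → T → ℕ
  Post : P → T → ℕ
  f : T → E

/-- A transition `t` is enabled at marking `M` if `M(p) ≥ Pre(p,t)` for all `p`. -/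
def enabled {P T E : Type} (N : SyncPN P T E) (M : P → ℕ) (t : T) : Prop :=
  ∀ p, N.Pre p t ≤ M p

/-- Occurrence of input event `e` at marking `M`: all enabled transitions labeled `e`
fire simultaneously: `step M e (p) = M(p) + Σ Post(p,t) − Σ Pre(p,t)`,
the sums ranging over enabled transitions labeled `e`. -/
noncomputable def step {P T E : Type} [Fintype T] (N : SyncPN P T E) (M : P → ℕ)
    (e : E) : P → ℕ := fun p =>
  M p + (∑ t : T, if N.f t = e ∧ enabled N M t then N.Post p t else 0)
      - ∑ t : T, if N.f t = e ∧ enabled N M t then N.Pre p t else 0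

/-- Extension of `step` to input words: `M →w stepWord N M w`. -/
noncomputable def stepWord {P T E : Type} [Fintype T] (N : SyncPN P T E) (M : P → ℕ)
    (w : List E) : P → ℕ :=
  w.foldl (step N) M

/-- A net is deterministic if no place has two distinct output transitions
sharing the same label. -/
def deterministic {P T E : Type} (N : SyncPN P T E) : Prop :=
  ∀ (p : P) (t t' : T), t ≠ t' → 1 ≤ N.Pre p t → 1 ≤ N.Pre p t' → N.f t ≠ N.f t'

/-- A state machine: each transition `t` has single input place `ins t`
and single output place `outs t`, with arc weight 1. -/
def isSM {P T E : Type} (N : SyncPN P T E) (ins outs : T → P) : Prop :=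
  (∀ p t, N.Pre p t = if p = ins t then 1 else 0) ∧
  (∀ p t, N.Post p t = if p = outs t then 1 else 0)

/-- Strong connectedness of the associated graph of a state machine
(an arc from `ins t` to `outs t` for each transition `t`). -/
def stronglyConnected {P T : Type} (ins outs : T → P) : Prop :=
  ∀ p p' : P, Relation.ReflTransGen (fun a b => ∃ t, ins t = a ∧ outs t = b) p p'

/-!
An event changes the number of tokens in `S` by the sum, over the transitions that fire, of what
each one puts into `S` minus what it takes from `S`. In a state machine a transition that takes a
token from a closed set returns it to that set, so no summand is negative.
-/

section Net

variable {P T E : Type} [Fintype T]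

/-- The transitions that fire when event `e` occurs at marking `M`: those labeled `e` and
enabled at `M`. -/
noncomputable def firingSet (N : SyncPN P T E) (M : P → ℕ) (e : E) : Finset T :=
  {t | N.f t = e ∧ enabled N M t}

lemma step_apply (N : SyncPN P T E) (M : P → ℕ) (e : E) (p : P) :
    step N M e p =
      M p + ∑ t ∈ firingSet N M e, N.Post p t - ∑ t ∈ firingSet N M e, N.Pre p t := by
  simp only [step, firingSet, Finset.sum_filter]

/-- Only an inequality: if the firing transitions jointly demand more tokens than `p` can supply,
the subtraction in `step` is truncated at `0`. -/
lemma marking_add_sum_post_le_step_add_sum_pre (N : SyncPN P T E) (M : P → ℕ) (e : E) (p : P) :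
    M p + ∑ t ∈ firingSet N M e, N.Post p t ≤
      step N M e p + ∑ t ∈ firingSet N M e, N.Pre p t := by
  rw [step_apply]
  exact le_tsub_add

theorem closed_set_tokens_monotone_general (N : SyncPN P T E) (S : Finset P) (M : P → ℕ) (e : E)
    (hS : ∀ t ∈ firingSet N M e, ∑ p ∈ S, N.Pre p t ≤ ∑ p ∈ S, N.Post p t) :
    ∑ p ∈ S, M p ≤ ∑ p ∈ S, step N M e p := by
  have hflow : ∑ p ∈ S, ∑ t ∈ firingSet N M e, N.Pre p t ≤
      ∑ p ∈ S, ∑ t ∈ firingSet N M e, N.Post p t := by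
    rw [Finset.sum_comm, Finset.sum_comm (s := S)]
    exact Finset.sum_le_sum hS
  refine le_of_add_le_add_right (a := ∑ p ∈ S, ∑ t ∈ firingSet N M e, N.Pre p t) ?_
  calc ∑ p ∈ S, M p + ∑ p ∈ S, ∑ t ∈ firingSet N M e, N.Pre p t
      ≤ ∑ p ∈ S, M p + ∑ p ∈ S, ∑ t ∈ firingSet N M e, N.Post p t := by gcongr
    _ = ∑ p ∈ S, (M p + ∑ t ∈ firingSet N M e, N.Post p t) := Finset.sum_add_distrib.symm
    _ ≤ ∑ p ∈ S, (step N M e p + ∑ t ∈ firingSet N M e, N.Pre p t) :=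
        Finset.sum_le_sum fun p _ => marking_add_sum_post_le_step_add_sum_pre N M e p
    _ = ∑ p ∈ S, step N M e p + ∑ p ∈ S, ∑ t ∈ firingSet N M e, N.Pre p t :=
        Finset.sum_add_distrib

end Net

namespace isSM

variable {P T E : Type} {N : SyncPN P T E} {ins outs : T → P}

lemma sum_pre (hSM : isSM N ins outs) (S : Finset P) (t : T) :
    ∑ p ∈ S, N.Pre p t = if ins t ∈ S then 1 else 0 := by
  simp only [hSM.1, Finset.sum_ite_eq']

lemma sum_post (hSM : isSM N ins outs) (S : Finset P) (t : T) :
    ∑ p ∈ S, N.Post p t = if outs t ∈ S then 1 else 0 := by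
  simp only [hSM.2, Finset.sum_ite_eq']

lemma sum_pre_le_sum_post (hSM : isSM N ins outs) {S : Finset P} {t : T}
    (hclosed : ins t ∈ S → outs t ∈ S) : ∑ p ∈ S, N.Pre p t ≤ ∑ p ∈ S, N.Post p t := by
  rw [hSM.sum_pre, hSM.sum_post]
  by_cases hin : ins t ∈ S
  · rw [if_pos hin, if_pos (hclosed hin)]
  · rw [if_neg hin]
    exact Nat.zero_le _

end isSM

/-- In a deterministic synchronized state machine, the token count in a closed set
of places `S` (out(t) ∈ S whenever in(t) ∈ S) never decreases under any event. -/
theorem closed_set_tokens_monotone {P T E : Type} [Fintype P] [Fintype T]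
    (N : SyncPN P T E) (ins outs : T → P)
    (hSM : isSM N ins outs) (hdet : deterministic N)
    (S : Finset P) (hclosed : ∀ t : T, ins t ∈ S → outs t ∈ S) :
    ∀ (M : P → ℕ) (e : E), ∑ p ∈ S, M p ≤ ∑ p ∈ S, step N M e p :=
  fun M e => closed_set_tokens_monotone_general N S M e
    fun t _ => hSM.sum_pre_le_sum_post (hclosed t)
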